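/- For every ω ∈ ℂ with Im ω > 0 there exist constants C > 0 and c > 0 (depending only on ω and α) such that for all ρ > 0 and all φ ∈ [0, 2π] \ {φ₊, φ₋}: |∫_ℝ 𝒵(β, φ) e^{iωρ cosh β} dβ| ≤ C e^{−cρ}. In particular the bound is uniform in φ, even though 𝒵(·, φ) develops a real pole at β = 0 as φ → φ_±. -/

import Mathlib

/-!
The kernel `Zker α β φ` is a signed sum of four functions `β ↦ coth ((β + iθ) / 4)` with real
`θ` depending on `α` and `φ`. The factor `e^{iωρ cosh β}` is even in `β`, so only the even part of
the kernel contributes to the integral, and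
`coth ((β + iθ) / 4) + coth ((-β + iθ) / 4)` has norm
`|sin (θ/2)| / (sinh² (β/4) + sin² (θ/4))`. By `sinh² u ≥ u²` this is at most
`8 b / (β² + b²)` with `b = 4 |sin (θ/4)|` (`norm_ccoth_even_le`), a Poisson kernel whose integral
over `ℝ` is at most `8π` whatever `b` is; in particular nothing degenerates when `θ → 0`, that is,
when a pole reaches the real line. Together with `|e^{iωρ cosh β}| ≤ e^{-ρ Im ω}`
this gives the claim with `C = 16π` and `c = Im ω`.
-/

open Real MeasureTheory Set Filter

/-- Complex hyperbolic cotangent. -/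
noncomputable def ccoth (z : ℂ) : ℂ := Complex.cosh z / Complex.sinh z

/-- The function `U` from the Sommerfeld kernel construction. -/
noncomputable def Ufun (α : ℝ) (ζ : ℂ) : ℂ :=
  ccoth ((1/4 : ℂ) * (ζ - Complex.I * (π/2 : ℝ) + Complex.I * (α : ℝ))) -
  ccoth ((1/4 : ℂ) * (ζ - Complex.I * (π/2 : ℝ) - Complex.I * (α : ℝ)))

/-- The function `Z`. -/
noncomputable def Zfun (α : ℝ) (z : ℂ) : ℂ :=
  -Ufun α (z - Complex.I * (π/2 : ℝ)) + Ufun α (z - Complex.I * (5*π/2 : ℝ))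

/-- The Sommerfeld-type kernel `𝒵(β, φ) = Z(β + 2πi − iφ)`. -/
noncomputable def Zker (α : ℝ) (β φ : ℝ) : ℂ :=
  Zfun α ((β : ℂ) + 2*(π : ℝ)*Complex.I - Complex.I * (φ : ℝ))

/-- The Poisson kernel of width `b` has total mass `π` for `b > 0`; for `b = 0` it vanishes. -/
lemma integrable_poisson (b : ℝ) (hb : 0 ≤ b) :
    Integrable (fun x : ℝ => b / (x ^ 2 + b ^ 2)) ∧ ∫ x : ℝ, b / (x ^ 2 + b ^ 2) ≤ π := by
  rcases hb.eq_or_lt with rfl | hb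
  · simpa using Real.pi_pos.le
  · have h : (fun x : ℝ => b / (x ^ 2 + b ^ 2)) = fun x => b⁻¹ * (1 + (x / b) ^ 2)⁻¹ := by
      funext x
      have : x ^ 2 + b ^ 2 ≠ 0 := by positivity
      have : 1 + (x / b) ^ 2 ≠ 0 := by positivity
      field_simp
      ring
    rw [h]
    refine ⟨(integrable_inv_one_add_sq.comp_div hb.ne').const_mul _, ?_⟩
    rw [integral_const_mul, Measure.integral_comp_div (fun x : ℝ => (1 + x ^ 2)⁻¹),
      integral_univ_inv_one_add_sq, abs_of_pos hb, smul_eq_mul, ← mul_assoc,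
      inv_mul_cancel₀ hb.ne', one_mul]

lemma sq_le_sinh_sq (u : ℝ) : u ^ 2 ≤ Real.sinh u ^ 2 := by
  rw [← sq_abs u, ← sq_abs (Real.sinh u), Real.abs_sinh]
  exact pow_le_pow_left₀ (abs_nonneg u) (Real.self_le_sinh_iff.2 (abs_nonneg u)) 2

/-- The even part of `β ↦ coth ((β + iθ) / 4)` is dominated by a Poisson kernel of width
`4 |sin (θ/4)|`. This holds also at a pole, where `ccoth` takes the junk value `0`. -/
lemma norm_ccoth_even_le (x θ : ℝ) :
    ‖ccoth ((1/4 : ℂ) * (x + Complex.I * θ)) + ccoth ((1/4 : ℂ) * (-x + Complex.I * θ))‖ ≤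
      8 * (4 * |Real.sin (θ / 4)| / (x ^ 2 + (4 * |Real.sin (θ / 4)|) ^ 2)) := by
  obtain ⟨u, rfl⟩ : ∃ u, x = 4 * u := ⟨x / 4, by ring⟩
  obtain ⟨v, rfl⟩ : ∃ v, θ = 4 * v := ⟨θ / 4, by ring⟩
  have hv : 4 * v / 4 = v := by ring
  rw [hv]
  have hA : (1/4 : ℂ) * (((4 * u : ℝ) : ℂ) + Complex.I * ((4 * v : ℝ) : ℂ)) = u + v * Complex.I := by
    push_cast; ring
  have hB : (1/4 : ℂ) * (-((4 * u : ℝ) : ℂ) + Complex.I * ((4 * v : ℝ) : ℂ))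
      = -u + v * Complex.I := by
    push_cast; ring
  rw [hA, hB]
  set A : ℂ := u + v * Complex.I
  set B : ℂ := -u + v * Complex.I
  have hsA : Complex.sinh A = Real.sinh u * Real.cos v + Real.cosh u * Real.sin v * Complex.I := by
    simp [A, Complex.sinh_add, Complex.sinh_mul_I, Complex.cosh_mul_I]; ring
  have hcA : Complex.cosh A = Real.cosh u * Real.cos v + Real.sinh u * Real.sin v * Complex.I := by
    simp [A, Complex.cosh_add, Complex.sinh_mul_I, Complex.cosh_mul_I]; ring
  have hsB : Complex.sinh B =
      -Real.sinh u * Real.cos v + Real.cosh u * Real.sin v * Complex.I := by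
    simp [B, Complex.sinh_add, Complex.sinh_mul_I, Complex.cosh_mul_I]; ring
  have hcB : Complex.cosh B = Real.cosh u * Real.cos v - Real.sinh u * Real.sin v * Complex.I := by
    simp [B, Complex.cosh_add, Complex.sinh_mul_I, Complex.cosh_mul_I]; ring
  have h1 : (Real.cosh u : ℂ) ^ 2 = 1 + (Real.sinh u : ℂ) ^ 2 := by
    exact_mod_cast (by rw [Real.cosh_sq]; ring : Real.cosh u ^ 2 = 1 + Real.sinh u ^ 2)
  have h2 : (Real.cos v : ℂ) ^ 2 = 1 - (Real.sin v : ℂ) ^ 2 := by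
    exact_mod_cast (Real.cos_sq' v)
  have hprod : Complex.sinh A * Complex.sinh B =
      ((-(Real.sinh u ^ 2 + Real.sin v ^ 2) : ℝ) : ℂ) := by
    rw [hsA, hsB]
    simp only [Complex.ofReal_neg, Complex.ofReal_add, Complex.ofReal_mul, Complex.ofReal_pow,
      Complex.ofReal_ofNat]
    linear_combination (Real.cosh u : ℂ) ^ 2 * (Real.sin v : ℂ) ^ 2 * Complex.I_sq
      - (Real.sin v : ℂ) ^ 2 * h1 - (Real.sinh u : ℂ) ^ 2 * h2
  have hnum : Complex.cosh A * Complex.sinh B + Complex.cosh B * Complex.sinh A =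
      ((2 * Real.sin v * Real.cos v : ℝ) : ℂ) * Complex.I := by
    rw [hsA, hsB, hcA, hcB]
    simp only [Complex.ofReal_neg, Complex.ofReal_add, Complex.ofReal_mul, Complex.ofReal_pow,
      Complex.ofReal_ofNat]
    linear_combination (2 * Real.sin v * Real.cos v : ℂ) * Complex.I * h1
  rcases (add_nonneg (sq_nonneg (Real.sinh u)) (sq_nonneg (Real.sin v))).eq_or_lt with h0 | h0
  · have hp : Complex.sinh A = 0 ∧ Complex.sinh B = 0 := by
      have e1 : Real.sinh u = 0 := by nlinarith [sq_nonneg (Real.sinh u), sq_nonneg (Real.sin v)]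
      have e2 : Real.sin v = 0 := by nlinarith [sq_nonneg (Real.sinh u), sq_nonneg (Real.sin v)]
      rw [hsA, hsB, e1, e2]; simp
    rw [ccoth, ccoth, hp.1, hp.2]
    simp only [div_zero, add_zero, norm_zero]
    positivity
  · have hne : Complex.sinh A * Complex.sinh B ≠ 0 := by
      rw [hprod]; exact_mod_cast (neg_lt_zero.2 h0).ne
    have hA0 := left_ne_zero_of_mul hne
    have hB0 := right_ne_zero_of_mul hne
    have heq : ccoth A + ccoth B =
        (((2 * Real.sin v * Real.cos v : ℝ) : ℂ) * Complex.I) /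
          ((-(Real.sinh u ^ 2 + Real.sin v ^ 2) : ℝ) : ℂ) := by
      rw [← hprod, ← hnum, ccoth, ccoth]
      field_simp
    rw [heq, norm_div, norm_mul, Complex.norm_I, mul_one, Complex.norm_real, Complex.norm_real,
      Real.norm_eq_abs, Real.norm_eq_abs, abs_neg, abs_of_pos h0, abs_mul, abs_mul, abs_two]
    by_cases hs : Real.sin v = 0
    · simp [hs]
    have hs' : 0 < |Real.sin v| := abs_pos.2 hs
    have hden : 0 < u ^ 2 + Real.sin v ^ 2 := by positivity
    calc 2 * |Real.sin v| * |Real.cos v| / (Real.sinh u ^ 2 + Real.sin v ^ 2)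
        ≤ 2 * |Real.sin v| * 1 / (u ^ 2 + Real.sin v ^ 2) := by
          have hsq := sq_le_sinh_sq u
          have hcos := Real.abs_cos_le_one v
          exact div_le_div₀ (by positivity) (mul_le_mul_of_nonneg_left hcos (by positivity)) hden
            (by linarith)
      _ = 8 * (4 * |Real.sin v| / ((4 * u) ^ 2 + (4 * |Real.sin v|) ^ 2)) := by
          have : (4 * u) ^ 2 + (4 * |Real.sin v|) ^ 2 = 16 * (u ^ 2 + Real.sin v ^ 2) := by
            rw [mul_pow, mul_pow, sq_abs]; ring
          rw [this]
          field_simp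
          norm_num

lemma Zker_eq (α β φ : ℝ) :
    Zker α β φ = -ccoth ((1/4 : ℂ) * (β + Complex.I * ((π + α - φ : ℝ) : ℂ)))
      + ccoth ((1/4 : ℂ) * (β + Complex.I * ((π - α - φ : ℝ) : ℂ)))
      + ccoth ((1/4 : ℂ) * (β + Complex.I * ((-π + α - φ : ℝ) : ℂ)))
      - ccoth ((1/4 : ℂ) * (β + Complex.I * ((-π - α - φ : ℝ) : ℂ))) := by
  have e : ∀ a b c d a' b' c' d' : ℂ, a = a' → b = b' → c = c' → d = d' →
      -(ccoth a - ccoth b) + (ccoth c - ccoth d)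
        = -ccoth a' + ccoth b' + ccoth c' - ccoth d' := by
    rintro a b c d _ _ _ _ rfl rfl rfl rfl; ring
  unfold Zker Zfun Ufun
  apply e <;> (push_cast; ring)

/-- Uniform exponential decay in `ρ` of the diffracted-wave integral
`∫_ℝ 𝒵(β,φ) e^{iωρ cosh β} dβ`, uniformly over `φ ∈ [0,2π] \ {φ₊, φ₋}`. -/
theorem diffracted_integral_bound (α : ℝ) (hα : α ∈ Set.Ioo (π/2) π)
    (ω : ℂ) (hω : 0 < ω.im) :
    ∃ C > 0, ∃ c > 0, ∀ ρ : ℝ, 0 < ρ →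
      ∀ φ ∈ Set.Icc (0:ℝ) (2*π), φ ≠ π + α → φ ≠ π - α →
      ‖∫ β : ℝ, Zker α β φ * Complex.exp (Complex.I * ω * (ρ : ℂ) * (Real.cosh β : ℂ))‖
        ≤ C * Real.exp (-c * ρ) := by
  refine ⟨16 * π, by positivity, ω.im, hω, fun ρ hρ φ _ _ _ => ?_⟩
  set f : ℝ → ℂ := fun β =>
    Zker α β φ * Complex.exp (Complex.I * ω * (ρ : ℂ) * (Real.cosh β : ℂ)) with hf
  -- If `f` were not integrable, its Bochner integral would be `0` and the bound trivial.
  by_cases hint : Integrable f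
  swap
  · rw [integral_undef hint, norm_zero]; positivity
  have hsym : ∫ β, f β = (1/2 : ℂ) * ∫ β, (f β + f (-β)) := by
    rw [integral_add hint hint.comp_neg, integral_neg_eq_self f volume]; ring
  let P : ℝ → ℝ → ℝ := fun θ x =>
    4 * |Real.sin (θ / 4)| / (x ^ 2 + (4 * |Real.sin (θ / 4)|) ^ 2)
  have hP : ∀ θ, Integrable (P θ) ∧ ∫ x, P θ x ≤ π := fun θ =>
    integrable_poisson (4 * |Real.sin (θ / 4)|) (by positivity)
  let G : ℝ → ℝ := fun x =>
    P (π + α - φ) x + P (π - α - φ) x + P (-π + α - φ) x + P (-π - α - φ) x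
  have h12 := (hP (π + α - φ)).1.add (hP (π - α - φ)).1
  have h123 := h12.add (hP (-π + α - φ)).1
  have hG : Integrable G := h123.add (hP (-π - α - φ)).1
  have hGint : ∫ x, G x ≤ 4 * π := by
    have e1 : ∫ x, G x = (∫ x, P (π + α - φ) x) + (∫ x, P (π - α - φ) x)
        + (∫ x, P (-π + α - φ) x) + ∫ x, P (-π - α - φ) x := by
      rw [← integral_add' (hP _).1 (hP _).1, ← integral_add' h12 (hP _).1,
        ← integral_add' h123 (hP _).1]
      rfl
    rw [e1]
    linarith [(hP (π + α - φ)).2, (hP (π - α - φ)).2, (hP (-π + α - φ)).2, (hP (-π - α - φ)).2]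
  have hexp : ∀ β : ℝ, ‖Complex.exp (Complex.I * ω * (ρ : ℂ) * (Real.cosh β : ℂ))‖
      ≤ Real.exp (-ω.im * ρ) := by
    intro β
    rw [Complex.norm_exp, Complex.re_mul_ofReal, Complex.re_mul_ofReal, Complex.I_mul_re]
    apply Real.exp_le_exp.2
    nlinarith [Real.one_le_cosh β, mul_pos hω hρ]
  have hbound : ∀ β : ℝ, ‖f β + f (-β)‖ ≤ 8 * Real.exp (-ω.im * ρ) * G β := by
    intro β
    have hfac : f β + f (-β) = (Zker α β φ + Zker α (-β) φ) *
        Complex.exp (Complex.I * ω * (ρ : ℂ) * (Real.cosh β : ℂ)) := by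
      simp only [hf, Real.cosh_neg]; ring
    have hZ : ‖Zker α β φ + Zker α (-β) φ‖ ≤ 8 * G β := by
      have k1 := norm_ccoth_even_le β (π + α - φ)
      have k2 := norm_ccoth_even_le β (π - α - φ)
      have k3 := norm_ccoth_even_le β (-π + α - φ)
      have k4 := norm_ccoth_even_le β (-π - α - φ)
      have tri : ∀ a b c d a' b' c' d' : ℂ,
          ‖(-a + b + c - d) + (-a' + b' + c' - d')‖
            ≤ ‖a + a'‖ + ‖b + b'‖ + ‖c + c'‖ + ‖d + d'‖ := by
        intro a b c d a' b' c' d'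
        have : (-a + b + c - d) + (-a' + b' + c' - d')
            = -(a + a') + (b + b') + (c + c') + -(d + d') := by ring
        rw [this]
        refine norm_add₄_le.trans ?_
        rw [norm_neg, norm_neg]
      rw [Zker_eq, Zker_eq, Complex.ofReal_neg]
      refine (tri _ _ _ _ _ _ _ _).trans ?_
      simp only [G, P]
      linarith
    rw [hfac, norm_mul]
    calc _ ≤ (8 * G β) * Real.exp (-ω.im * ρ) :=
          mul_le_mul hZ (hexp β) (norm_nonneg _) ((norm_nonneg _).trans hZ)
      _ = _ := by ring
  have hmain := norm_integral_le_of_norm_le (hG.const_mul (8 * Real.exp (-ω.im * ρ)))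
    (Eventually.of_forall hbound)
  rw [integral_const_mul] at hmain
  have hE := Real.exp_pos (-ω.im * ρ)
  have hlast := mul_le_mul_of_nonneg_left hGint (by positivity : 0 ≤ 8 * Real.exp (-ω.im * ρ))
  rw [hsym, norm_mul]
  have : ‖(1/2 : ℂ)‖ = 1/2 := by norm_num
  rw [this]
  linarith
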